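/- For all integers k ≥ 0 and m ≥ 1, we have Σ_{j=1}^{k} ξ_m^j/j! − Σ_{j=m+1}^{m+k} ξ_m^j/j! ≥ 0. -/

import Mathlib

open Real Finset

/-!
A root `x` of the tail equation is at least `1`, because for `x < 1` the tail is at most
`exp x - 1 - x ≤ x ^ 2 < 1`. Hence every block of terms taken from the tail is at most
`1 ≤ x`, and `x` alone is already the first term of `∑ j ∈ Icc 1 k, x ^ j / j !` when `0 < k`.
-/

theorem sum_Ico_add_le_tsum {α : Type*} [AddCommMonoid α] [PartialOrder α]
    [IsOrderedAddMonoid α] [TopologicalSpace α] [OrderClosedTopology α] {a : ℕ → α} {n : ℕ}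
    (ha : ∀ j, 0 ≤ a (n + j)) (hs : Summable fun j ↦ a (n + j)) (k : ℕ) :
    ∑ j ∈ Ico n (n + k), a j ≤ ∑' j, a (n + j) := by
  rw [sum_Ico_eq_sum_range, Nat.add_sub_cancel_left]
  exact hs.sum_le_tsum (range k) fun j _ ↦ ha j

theorem summable_pow_add_div_factorial (x : ℝ) (n : ℕ) :
    Summable fun j : ℕ ↦ x ^ (n + j) / (Nat.factorial (n + j) : ℝ) :=
  (summable_pow_div_factorial x).comp_injective (add_right_injective n)

theorem sum_range_add_tsum_pow_add_div_factorial (x : ℝ) (n : ℕ) :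
    ∑ i ∈ range n, x ^ i / (Nat.factorial i : ℝ) +
      ∑' j : ℕ, x ^ (n + j) / (Nat.factorial (n + j) : ℝ) = exp x := by
  simp only [exp_eq_exp_ℝ, NormedSpace.exp_eq_tsum_div, add_comm n,
    (summable_pow_div_factorial x).sum_add_tsum_nat_add n]

theorem tsum_pow_add_div_factorial_le_sq {x : ℝ} (hx₀ : 0 ≤ x) (hx₁ : x ≤ 1) {n : ℕ}
    (hn : 2 ≤ n) : ∑' j : ℕ, x ^ (n + j) / (Nat.factorial (n + j) : ℝ) ≤ x ^ 2 := by
  have h_head : 1 + x ≤ ∑ i ∈ range n, x ^ i / (Nat.factorial i : ℝ) := by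
    calc 1 + x = ∑ i ∈ range 2, x ^ i / (Nat.factorial i : ℝ) := by simp [sum_range_succ]
      _ ≤ ∑ i ∈ range n, x ^ i / (Nat.factorial i : ℝ) :=
        sum_le_sum_of_subset_of_nonneg (range_subset_range.2 hn) fun i _ _ ↦ by positivity
  have h_exp : exp x - 1 - x ≤ x ^ 2 :=
    (le_abs_self _).trans (abs_exp_sub_one_sub_id_le (abs_le.2 ⟨by linarith, hx₁⟩))
  linarith [sum_range_add_tsum_pow_add_div_factorial x n]

theorem one_le_of_tsum_pow_add_div_factorial_eq_one {x : ℝ} (hx : 0 ≤ x) {n : ℕ} (hn : 2 ≤ n)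
    (h : ∑' j : ℕ, x ^ (n + j) / (Nat.factorial (n + j) : ℝ) = 1) : 1 ≤ x := by
  by_contra! hx₁
  have h_sq : 1 ≤ x ^ 2 := h ▸ tsum_pow_add_div_factorial_le_sq hx hx₁.le hn
  exact h_sq.not_gt (pow_lt_one₀ hx hx₁ two_ne_zero)

theorem le_sum_Icc_pow_div_factorial {x : ℝ} (hx : 0 ≤ x) {k : ℕ} (hk : 1 ≤ k) :
    x ≤ ∑ j ∈ Icc 1 k, x ^ j / (Nat.factorial j : ℝ) := by
  simpa using single_le_sum (f := fun j ↦ x ^ j / (Nat.factorial j : ℝ))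
    (fun j _ ↦ by positivity) (left_mem_Icc.2 hk)

theorem partial_sums_nonneg_general (k m : ℕ) {x : ℝ} (hx : 0 ≤ x)
    (h_tail : ∑' j : ℕ, x ^ (m + 1 + j) / (Nat.factorial (m + 1 + j) : ℝ) ≤ x) :
    0 ≤ (∑ j ∈ Icc 1 k, x ^ j / (Nat.factorial j : ℝ)) -
        ∑ j ∈ Icc (m + 1) (m + k), x ^ j / (Nat.factorial j : ℝ) := by
  obtain rfl | hk := k.eq_zero_or_pos
  · simp
  rw [sub_nonneg, ← Ico_add_one_right_eq_Icc (m + 1), add_right_comm m k 1]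
  calc ∑ j ∈ Ico (m + 1) (m + 1 + k), x ^ j / (Nat.factorial j : ℝ)
      ≤ ∑' j : ℕ, x ^ (m + 1 + j) / (Nat.factorial (m + 1 + j) : ℝ) :=
        sum_Ico_add_le_tsum (a := fun j ↦ x ^ j / (Nat.factorial j : ℝ))
          (fun j ↦ by positivity) (summable_pow_add_div_factorial x (m + 1)) k
    _ ≤ x := h_tail
    _ ≤ ∑ j ∈ Icc 1 k, x ^ j / (Nat.factorial j : ℝ) := le_sum_Icc_pow_div_factorial hx hk

/-- For all integers `k ≥ 0` and `m ≥ 1`, writing `ξ_m` for the unique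
positive solution of `Σ_{j=m+1}^{∞} x^j/j! = 1`, we have
`Σ_{j=1}^{k} ξ_m^j/j! − Σ_{j=m+1}^{m+k} ξ_m^j/j! ≥ 0`. -/
theorem partial_sums_nonneg (k m : ℕ) (hm : 1 ≤ m) (x : ℝ) (hx : 0 < x)
    (hxm : (∑' j : ℕ, x ^ (m + 1 + j) / (Nat.factorial (m + 1 + j) : ℝ)) = 1) :
    0 ≤ (∑ j ∈ Finset.Icc 1 k, x ^ j / (Nat.factorial j : ℝ)) -
        ∑ j ∈ Finset.Icc (m + 1) (m + k), x ^ j / (Nat.factorial j : ℝ) := by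
  have one_le_x : 1 ≤ x :=
    one_le_of_tsum_pow_add_div_factorial_eq_one hx.le (Nat.add_le_add_right hm 1) hxm
  exact partial_sums_nonneg_general k m hx.le (hxm.trans_le one_le_x)
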